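/- Let S be a commutative ℚ-algebra, R an associative S-algebra, A, B ∈ R, C := AB − BA, and suppose that for scalars α_1,…,α_{L+1}, δ, ε, β, λ_1,…,λ_M, η, ω_1,…,ω_L, ζ ∈ S one has AC − CA = Σ_{i=1}^{L+1} α_i A^i + δ·B + ε·1 + β·(AB+BA) and BC − CB = Σ_{i=1}^{M} λ_i A^i − β·B² + η·B + Σ_{i=1}^{L} ω_i·(A^i B + B A^i) + ζ·1. Then there exist scalars k_1, …, k_{M+1} ∈ S such that the element K := C² − Σ_{i=1}^{L+1} α_i·(A^i B + B A^i) − β·Σ_{i=1}^{L} ω_i·(A^i B + B A^i) − β·(A B² + B² A) + Σ_{i=1}^{M+1} k_i A^i − (2ε + βη)·B + (β² − δ)·B² satisfies AK − KA = 0 and BK − KB = 0. -/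

import Mathlib

theorem core_aux {S R : Type*} [CommRing S] [Ring R] [Algebra S R]
    (A B C P W Λ k : R) (δ β : S) (hC : C = A * B - B * A)
    (hAP : A * P = P * A) (hAW : A * W = W * A) (hAΛ : A * Λ = Λ * A) (hAk : A * k = k * A)
    (hWΛ : W * Λ = Λ * W)
    (hAC : A * C - C * A = P + δ • B + β • (A * B + B * A))
    (hBC : B * C - C * B = Λ - β • (B * B) + (W * B + B * W))
    (hk : B * k - k * B = B * (W * W) - W * W * B - (C * Λ + Λ * C))
    (K : R) (hK : K = C * C - (P * B + B * P) - β • (W * B + B * W)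
      - β • (A * (B * B) + B * B * A) + k + (β ^ 2 - δ) • (B * B)) :
    A * K - K * A = 0 ∧ B * K - K * B = 0 := by
  have hJ : B * P - P * B = W * C + C * W := by
    have e : B * (A * C - C * A) - (A * C - C * A) * B
        = A * (B * C - C * B) - (B * C - C * B) * A := by
      rw [hC]; noncomm_ring
    rw [hAC, hBC] at e
    have h1 : A * (W * B) = W * (A * B) := by rw [← mul_assoc, hAW, mul_assoc]
    have h2 : B * (W * A) = B * (A * W) := by rw [hAW]
    have h3 := hAΛ
    rw [hC]
    linear_combination (norm := skip) e + h1 - h2 + hAΛ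
    simp only [mul_add, add_mul, mul_sub, sub_mul, mul_assoc, smul_mul_assoc, mul_smul_comm]
    module
  have hCW : ∀ z : R, A * (W * z) = W * (A * z) := fun z => by
    rw [← mul_assoc, hAW, mul_assoc]
  have hCP : ∀ z : R, A * (P * z) = P * (A * z) := fun z => by
    rw [← mul_assoc, hAP, mul_assoc]
  constructor
  · have e : B * (A * C - C * A) - (A * C - C * A) * B
        = A * (B * C - C * B) - (B * C - C * B) * A := by
      rw [hC]; noncomm_ring
    rw [hBC] at e
    have e1 : A * (C * C) - C * C * A = C * (P + δ • B + β • (A * B + B * A))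
        + (P + δ • B + β • (A * B + B * A)) * C := by
      rw [← hAC]; noncomm_ring
    have e2 : C * (A * B + B * A) + (A * B + B * A) * C
       - A * (C * B + B * C) - (C * B + B * C) * A
       = B * (A * C - C * A) - (A * C - C * A) * B := by noncomm_ring
    have e3 := e2.trans e
    have e4 := congrArg (fun z => β • z) e3
    rw [hK]
    linear_combination (norm := skip) e1 + e4 + hAk
    rw [hC]
    simp only [mul_add, add_mul, mul_sub, sub_mul, mul_assoc, smul_mul_assoc, mul_smul_comm,
      smul_add, smul_sub, hAW, hAP, hCW, hCP, hAΛ]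
    module
  · have e1 : B * (C * C) - C * C * B = C * (Λ - β • (B * B) + (W * B + B * W))
        + (Λ - β • (B * B) + (W * B + B * W)) * C := by
      rw [← hBC]; noncomm_ring
    have e2 : B * (P * B + B * P) - (P * B + B * P) * B
       = B * (W * C + C * W) + (W * C + C * W) * B := by
      rw [← hJ]; noncomm_ring
    have e3 : (B * C - C * B) * W - W * (B * C - C * B)
       = (Λ - β • (B * B) + (W * B + B * W)) * W - W * (Λ - β • (B * B) + (W * B + B * W)) := by
      rw [hBC]
    have e5 : β • (B * (A * (B * B) + B * B * A) - (A * (B * B) + B * B * A) * B)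
       = - β • (C * (B * B) + B * B * C) := by
      rw [hC]
      simp only [mul_add, add_mul, mul_sub, sub_mul, mul_assoc]
      module
    rw [hK]
    linear_combination (norm := skip) e1 - e2 + hk - e5 - e3 + hWΛ
    simp only [mul_add, add_mul, mul_sub, sub_mul, mul_assoc, smul_mul_assoc, mul_smul_comm,
      smul_add, smul_sub]
    module

set_option maxHeartbeats 1000000 in
open Polynomial in
theorem poly_aux {S R : Type*} [CommRing S] [Algebra ℚ S] [Ring R] [Algebra S R]
    (A B C : R) (hC : C = A * B - B * A) (δ β : S)
    (hv : A * (A * C - C * A) - (A * C - C * A) * A = δ • C + β • (A * C + C * A))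
    (M : ℕ) (lam : ℕ → S) :
    ∃ κ : ℕ → S, ∑ i ∈ Finset.range (M + 1), lam i • (C * A ^ i + A ^ i * C)
      = ∑ i ∈ Finset.range (M + 1), κ i • (A ^ (i + 1) * B - B * A ^ (i + 1)) := by
  obtain ⟨q, hq⟩ : ∃ q : S, 4 * q = 1 := ⟨algebraMap ℚ S (1 / 4), by
    rw [show (4 : S) = algebraMap ℚ S 4 from (map_ofNat _ 4).symm, ← map_mul]; norm_num⟩
  let U : Module.End S R := LinearMap.mulLeft S A + LinearMap.mulRight S A
  let Q : Module.End S R := LinearMap.mulLeft S A * LinearMap.mulRight S A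
  have hU : ∀ z, U z = A * z + z * A := fun z => by simp [U]
  have hQ : ∀ z, Q z = A * z * A := fun z => by simp [Q, mul_assoc]
  have hUQ : Commute U Q := by
    ext z
    simp only [Module.End.mul_apply, hU, hQ]
    noncomm_ring
  let T : S[X] := Polynomial.C q * (X ^ 2 - Polynomial.C β * X - Polynomial.C δ)
  have hT : ∀ f : S[X], A * (aeval U f C) * A = aeval U (T * f) C := by
    intro f
    have h0 : Q C = aeval U T C := by
      have : (4 : S) • Q C = aeval U (X ^ 2 - Polynomial.C β * X - Polynomial.C δ) C := by
        simp only [map_sub, map_mul, map_pow, aeval_X, aeval_C, LinearMap.sub_apply,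
          Module.End.mul_apply, pow_two, Module.algebraMap_end_apply, hU, hQ]
        linear_combination (norm := skip) - hv
        simp only [mul_add, add_mul, mul_sub, sub_mul, mul_assoc, smul_add]
        module
      have h2 : q • (4 : S) • Q C = Q C := by rw [smul_smul, mul_comm, hq, one_smul]
      rw [← h2, this]
      simp [T, Module.algebraMap_end_apply]
    have hc : Commute (aeval U f) Q := by
      induction f using Polynomial.induction_on' with
      | add p r hp hr => rw [map_add]; exact hp.add_left hr
      | monomial n a =>
        rw [aeval_monomial]
        exact Commute.mul_left (Algebra.commutes a Q) (hUQ.pow_left n)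
    rw [← hQ, ← Module.End.mul_apply, ← hc.eq, Module.End.mul_apply, h0, ← Module.End.mul_apply,
      ← map_mul, mul_comm]
  have hTd : T.natDegree ≤ 2 := by simp only [T]; compute_degree
  have hTc : T.coeff 2 = q := by simp [T, coeff_X, coeff_C]
  -- power sums
  have hσ : ∀ n : ℕ, ∃ f : S[X], f.natDegree ≤ n ∧ aeval U f C = C * A ^ n + A ^ n * C := by
    intro n
    induction n using Nat.twoStepInduction with
    | zero => exact ⟨1 + 1, by compute_degree, by
        rw [map_add, map_one]; simp⟩
    | one => exact ⟨X, natDegree_X_le, by simp [hU, add_comm]⟩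
    | more n h0 h1 =>
      obtain ⟨f, hf, hf'⟩ := h0
      obtain ⟨g, hg, hg'⟩ := h1
      refine ⟨X * g - T * f, ?_, ?_⟩
      · refine (natDegree_sub_le _ _).trans (max_le ?_ ?_)
        · exact (natDegree_mul_le_of_le natDegree_X_le hg).trans (by omega)
        · exact (natDegree_mul_le_of_le hTd hf).trans (by omega)
      · rw [map_sub, LinearMap.sub_apply, ← hT, hf', map_mul, Module.End.mul_apply, hg', aeval_X, hU]
        simp only [pow_succ' A (n+1), pow_succ' A n]
        have := (Commute.refl A).pow_right n
        have h1 : A * A ^ n = A ^ n * A := this.eq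
        have h2 : ∀ z, A * (A ^ n * z) = A ^ n * (A * z) := fun z => by
          rw [← mul_assoc, h1, mul_assoc]
        simp only [mul_add, add_mul, mul_assoc, h1, h2]
        abel
  have hχ : ∀ n : ℕ, ∃ f : S[X], f.natDegree ≤ n ∧ (2 : S) ^ n * f.coeff n = n + 1 ∧
      aeval U f C = A ^ (n + 1) * B - B * A ^ (n + 1) := by
    intro n
    induction n using Nat.twoStepInduction with
    | zero => exact ⟨1, by simp, by simp, by simp [hC]⟩
    | one => exact ⟨X, natDegree_X_le, by norm_num, by simp [hU, hC]; noncomm_ring⟩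
    | more n h0 h1 =>
      obtain ⟨f, hf, hfc, hf'⟩ := h0
      obtain ⟨g, hg, hgc, hg'⟩ := h1
      refine ⟨X * g - T * f, ?_, ?_, ?_⟩
      · refine (natDegree_sub_le _ _).trans (max_le ?_ ?_)
        · exact (natDegree_mul_le_of_le natDegree_X_le hg).trans (by omega)
        · exact (natDegree_mul_le_of_le hTd hf).trans (by omega)
      · have e : (T * f).coeff (2 + n) = T.coeff 2 * f.coeff n :=
          coeff_mul_add_eq_of_natDegree_le hTd hf
        rw [coeff_sub, show n + 2 = (n + 1) + 1 by rfl, coeff_X_mul, show n + 1 + 1 = 2 + n by ring, e, hTc]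
        push_cast at hgc ⊢
        linear_combination 2 * hgc - hfc - 2 ^ n * f.coeff n * hq
      · rw [map_sub, LinearMap.sub_apply, ← hT, hf', map_mul, Module.End.mul_apply, hg', aeval_X, hU]
        simp only [pow_succ' A (n+1), pow_succ' A (n+1+1), pow_succ' A (n+2), pow_succ' A n]
        have h1 : A * A ^ n = A ^ n * A := ((Commute.refl A).pow_right n).eq
        have h2 : ∀ z, A * (A ^ n * z) = A ^ n * (A * z) := fun z => by
          rw [← mul_assoc, h1, mul_assoc]
        simp only [mul_add, add_mul, mul_sub, sub_mul, mul_assoc, h1, h2]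
        abel
  have hmain : ∀ n : ℕ, ∀ f : S[X], f.natDegree < n → ∃ κ : ℕ → S,
      aeval U f C = ∑ i ∈ Finset.range n, κ i • (A ^ (i + 1) * B - B * A ^ (i + 1)) := by
    intro n
    induction n with
    | zero => intro f hf; omega
    | succ n ih =>
      intro f hf
      obtain ⟨g, hg, hgc, hg'⟩ := hχ n
      obtain ⟨r, hr⟩ : ∃ r : S, r * g.coeff n = 1 := by
        refine ⟨2 ^ n * algebraMap ℚ S (1 / (n + 1)), ?_⟩
        have : (n + 1 : S) * algebraMap ℚ S (1 / (n + 1)) = 1 := by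
          rw [show (n + 1 : S) = algebraMap ℚ S (n + 1) by simp, ← map_mul,
            mul_one_div_cancel (by positivity), map_one]
        linear_combination algebraMap ℚ S (1 / (n + 1)) * hgc + this
      obtain ⟨f', hf'⟩ : ∃ f', f' = f - Polynomial.C (f.coeff n * r) * g := ⟨_, rfl⟩
      have hf'c : f'.coeff n = 0 := by
        simp only [hf', coeff_sub, coeff_C_mul]
        linear_combination - f.coeff n * hr
      have hf'd : f'.natDegree ≤ n := by
        rw [hf']
        exact (natDegree_sub_le _ _).trans (max_le (by omega) ((natDegree_C_mul_le _ _).trans hg))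
      have hff : aeval U f C = aeval U f' C + (f.coeff n * r) • aeval U g C := by
        simp only [hf', map_sub, map_mul, aeval_C, LinearMap.sub_apply, Module.End.mul_apply,
          Module.algebraMap_end_apply]
        module
      by_cases hn : n = 0
      · subst hn
        have : f' = 0 := by
          rw [eq_C_of_natDegree_le_zero hf'd, hf'c, map_zero]
        refine ⟨fun _ => f.coeff 0 * r, ?_⟩
        rw [hff, this, hg']; simp
      · have hlt : f'.natDegree < n := by
          rcases hf'd.lt_or_eq with h | h
          · exact h
          · exfalso
            rw [← h, coeff_natDegree, leadingCoeff_eq_zero] at hf'c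
            rw [hf'c] at h; simp at h; omega
        obtain ⟨κ, hκ⟩ := ih f' hlt
        refine ⟨fun i => if i = n then f.coeff n * r else κ i, ?_⟩
        rw [Finset.sum_range_succ, hff, hκ, hg']
        simp only [if_true]
        congr 1
        refine Finset.sum_congr rfl fun i hi => ?_
        rw [if_neg (by have := Finset.mem_range.1 hi; omega)]
  choose σ hσd hσe using hσ
  obtain ⟨κ, hκ⟩ := hmain (M + 1) (∑ i ∈ Finset.range (M + 1), Polynomial.C (lam i) * σ i) (by
    refine Nat.lt_succ_of_le (natDegree_sum_le_of_forall_le _ _ fun i hi => ?_)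
    have := Finset.mem_range.1 hi
    exact (natDegree_C_mul_le _ _).trans ((hσd i).trans (by omega)))
  refine ⟨κ, ?_⟩
  rw [← hκ]
  simp [map_sum, LinearMap.sum_apply, Module.algebraMap_end_apply, hσe]

theorem sum_Icc_aux {R : Type*} [AddCommMonoid R] (n : ℕ) (f : ℕ → R) :
    ∑ i ∈ Finset.Icc 1 n, f i = ∑ i ∈ Finset.range n, f (i + 1) := by
  induction n with
  | zero => simp
  | succ n ih => rw [Finset.sum_Icc_succ_top (by omega), Finset.sum_range_succ, ih]

theorem comm_sum_aux {S R : Type*} [CommRing S] [Ring R] [Algebra S R] (A : R)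
    (s : Finset ℕ) (c : ℕ → S) : Commute A (∑ i ∈ s, c i • A ^ i) :=
  Commute.sum_right _ _ _ fun i _ => ((Commute.refl A).pow_right i).smul_right _

theorem anti_sum_aux {S R : Type*} [CommRing S] [Ring R] [Algebra S R] (A B : R)
    (s : Finset ℕ) (c : ℕ → S) :
    ∑ i ∈ s, c i • (A ^ i * B + B * A ^ i)
      = (∑ i ∈ s, c i • A ^ i) * B + B * (∑ i ∈ s, c i • A ^ i) := by
  simp only [Finset.sum_mul, Finset.mul_sum, ← Finset.sum_add_distrib, smul_add,
    smul_mul_assoc, mul_smul_comm]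

open Polynomial in
theorem sq_aux {S R : Type*} [CommRing S] [Ring R] [Algebra S R] (A : R)
    (M L : ℕ) (hL : L = M / 2) (ω : ℕ → S) (c : S) :
    ∃ (g : ℕ → S) (c' : S), (∑ i ∈ Finset.Icc 1 L, ω i • A ^ i + c • (1 : R)) ^ 2
      = ∑ i ∈ Finset.range (M + 1), g i • A ^ (i + 1) + c' • (1 : R) := by
  let p : S[X] := ∑ i ∈ Finset.Icc 1 L, Polynomial.C (ω i) * X ^ i + Polynomial.C c
  have hp : aeval A p = ∑ i ∈ Finset.Icc 1 L, ω i • A ^ i + c • (1 : R) := by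
    simp [p, Algebra.smul_def]
  have hd : p.natDegree ≤ L := by
    refine (natDegree_add_le _ _).trans (max_le ?_ (by simp))
    refine natDegree_sum_le_of_forall_le _ _ fun i hi => ?_
    exact (natDegree_C_mul_X_pow_le _ _).trans (Finset.mem_Icc.1 hi).2
  have hd2 : (p ^ 2).natDegree < M + 2 := by
    have := natDegree_pow_le_of_le 2 hd
    omega
  refine ⟨fun i => (p ^ 2).coeff (i + 1), (p ^ 2).coeff 0, ?_⟩
  rw [← hp, ← map_pow, aeval_eq_sum_range' hd2, Finset.sum_range_succ', pow_zero]

/-- Proposition 7 of the paper: over a commutative `ℚ`-algebra of scalars, given the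
commutation relations of the polynomial Lie algebra `L_M`, there exist scalars
`k_1, …, k_{M+1}` so that the Casimir `K` commutes with both `A` and `B`. -/
theorem stmt11 {S R : Type*} [CommRing S] [Algebra ℚ S] [Ring R] [Algebra S R]
    (M : ℕ) (hM : 1 ≤ M) (L : ℕ) (hL : L = M / 2)
    (A B C : R) (hC : C = A * B - B * A)
    (α lam ω : ℕ → S) (δ ε β η ζ : S)
    (hAC : A * C - C * A =
      ∑ i ∈ Finset.Icc 1 (L + 1), α i • A ^ i + δ • B + ε • (1 : R) + β • (A * B + B * A))
    (hBC : B * C - C * B =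
      ∑ i ∈ Finset.Icc 1 M, lam i • A ^ i - β • B ^ 2 + η • B
        + ∑ i ∈ Finset.Icc 1 L, ω i • (A ^ i * B + B * A ^ i) + ζ • (1 : R)) :
    ∃ k : ℕ → S,
      (A * (C ^ 2 - ∑ i ∈ Finset.Icc 1 (L + 1), α i • (A ^ i * B + B * A ^ i)
          - β • ∑ i ∈ Finset.Icc 1 L, ω i • (A ^ i * B + B * A ^ i)
          - β • (A * B ^ 2 + B ^ 2 * A)
          + ∑ i ∈ Finset.Icc 1 (M + 1), k i • A ^ i
          - (2 * ε + β * η) • B + (β ^ 2 - δ) • B ^ 2)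
        - (C ^ 2 - ∑ i ∈ Finset.Icc 1 (L + 1), α i • (A ^ i * B + B * A ^ i)
          - β • ∑ i ∈ Finset.Icc 1 L, ω i • (A ^ i * B + B * A ^ i)
          - β • (A * B ^ 2 + B ^ 2 * A)
          + ∑ i ∈ Finset.Icc 1 (M + 1), k i • A ^ i
          - (2 * ε + β * η) • B + (β ^ 2 - δ) • B ^ 2) * A = 0)
      ∧ (B * (C ^ 2 - ∑ i ∈ Finset.Icc 1 (L + 1), α i • (A ^ i * B + B * A ^ i)
          - β • ∑ i ∈ Finset.Icc 1 L, ω i • (A ^ i * B + B * A ^ i)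
          - β • (A * B ^ 2 + B ^ 2 * A)
          + ∑ i ∈ Finset.Icc 1 (M + 1), k i • A ^ i
          - (2 * ε + β * η) • B + (β ^ 2 - δ) • B ^ 2)
        - (C ^ 2 - ∑ i ∈ Finset.Icc 1 (L + 1), α i • (A ^ i * B + B * A ^ i)
          - β • ∑ i ∈ Finset.Icc 1 L, ω i • (A ^ i * B + B * A ^ i)
          - β • (A * B ^ 2 + B ^ 2 * A)
          + ∑ i ∈ Finset.Icc 1 (M + 1), k i • A ^ i
          - (2 * ε + β * η) • B + (β ^ 2 - δ) • B ^ 2) * B = 0) := by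
  obtain ⟨t, ht⟩ : ∃ t : S, 2 * t = 1 := ⟨algebraMap ℚ S (1 / 2), by
    rw [show (2 : S) = algebraMap ℚ S 2 from (map_ofNat _ 2).symm, ← map_mul]; norm_num⟩
  have cA := fun n (c : ℕ → S) => comm_sum_aux A (Finset.Icc 1 n) c
  have c1 : ∀ c : S, Commute A (c • (1 : R)) := fun c => (Commute.one_right A).smul_right c
  simp only [anti_sum_aux] at hBC ⊢
  have hAP := (cA (L + 1) α).add_right (c1 ε)
  have hAW := (cA L ω).add_right (c1 (t * η))
  have hAΛ := (cA M lam).add_right (c1 ζ)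
  have hWΛ : Commute (∑ i ∈ Finset.Icc 1 L, ω i • A ^ i + (t * η) • (1 : R))
      (∑ i ∈ Finset.Icc 1 M, lam i • A ^ i + ζ • (1 : R)) := by
    refine Commute.add_right (Commute.sum_right _ _ _ fun i _ => ?_)
      ((Commute.one_right _).smul_right _)
    exact (hAW.symm.pow_right i).smul_right _
  have hΛs : ∑ i ∈ Finset.Icc 1 M, lam i • A ^ i + ζ • (1 : R)
      = ∑ i ∈ Finset.range (M + 1), (if i = 0 then ζ else lam i) • A ^ i := by
    rw [Finset.sum_range_succ', sum_Icc_aux]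
    simp
  obtain ⟨g, c', hg⟩ := sq_aux A M L hL ω (t * η)
  generalize (∑ i ∈ Finset.Icc 1 (L + 1), α i • A ^ i) = a at *
  generalize (∑ i ∈ Finset.Icc 1 L, ω i • A ^ i) = w at *
  generalize (∑ i ∈ Finset.Icc 1 M, lam i • A ^ i) = l at *
  have hAC' : A * C - C * A = (a + ε • (1 : R)) + δ • B + β • (A * B + B * A) := by
    rw [hAC]; abel
  have hv : A * (A * C - C * A) - (A * C - C * A) * A = δ • C + β • (A * C + C * A) := by
    rw [hAC']
    have := hAP.eq
    linear_combination (norm := skip) this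
    rw [hC]
    simp only [mul_add, add_mul, mul_sub, sub_mul, mul_assoc, smul_mul_assoc, mul_smul_comm]
    module
  obtain ⟨κ, hκ⟩ := poly_aux A B C hC δ β hv M (fun i => if i = 0 then ζ else lam i)
  refine ⟨fun i => g (i - 1) + κ (i - 1), ?_⟩
  have hAk := cA (M + 1) (fun i => g (i - 1) + κ (i - 1))
  have hks : ∑ i ∈ Finset.Icc 1 (M + 1), (g (i - 1) + κ (i - 1)) • A ^ i
      = ∑ i ∈ Finset.range (M + 1), g i • A ^ (i + 1)
        + ∑ i ∈ Finset.range (M + 1), κ i • A ^ (i + 1) := by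
    rw [sum_Icc_aux, ← Finset.sum_add_distrib]
    simp [add_smul]
  have hκ1 : C * (l + ζ • (1 : R)) + (l + ζ • (1 : R)) * C
      = (∑ i ∈ Finset.range (M + 1), κ i • A ^ (i + 1)) * B
        - B * (∑ i ∈ Finset.range (M + 1), κ i • A ^ (i + 1)) := by
    rw [hΛs]
    simp only [Finset.sum_mul, Finset.mul_sum, ← Finset.sum_add_distrib,
      ← Finset.sum_sub_distrib, smul_mul_assoc, mul_smul_comm, ← smul_sub, ← smul_add]
    exact hκ
  have hk : B * (∑ i ∈ Finset.Icc 1 (M + 1), (g (i - 1) + κ (i - 1)) • A ^ i)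
      - (∑ i ∈ Finset.Icc 1 (M + 1), (g (i - 1) + κ (i - 1)) • A ^ i) * B
      = B * ((w + (t * η) • (1 : R)) * (w + (t * η) • (1 : R)))
        - (w + (t * η) • (1 : R)) * (w + (t * η) • (1 : R)) * B
        - (C * (l + ζ • (1 : R)) + (l + ζ • (1 : R)) * C) := by
    rw [hκ1, ← pow_two, hg, hks]
    simp only [mul_add, add_mul, smul_mul_assoc, mul_smul_comm, one_mul, mul_one]
    abel
  have hη : η = 2 * (t * η) := by linear_combination - η * ht
  refine core_aux A B C (a + ε • (1 : R)) (w + (t * η) • (1 : R)) (l + ζ • (1 : R)) _ δ β hC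
    hAP.eq hAW.eq hAΛ.eq hAk.eq hWΛ.eq hAC' ?_ hk _ ?_
  · rw [hBC]
    generalize t * η = θ at *
    subst hη
    simp only [mul_add, add_mul, smul_mul_assoc, mul_smul_comm, one_mul, mul_one, pow_two]
    module
  · generalize t * η = θ at *
    subst hη
    simp only [mul_add, add_mul, smul_mul_assoc, mul_smul_comm, one_mul, mul_one, pow_two,
      smul_add]
    module
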